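/- arXiv:math/0305124 — 2 statements merged into one kernel-verified Lean document; each statement's English description precedes it below -/
import Mathlib

section
/- The GL(7,ℝ)-orbit of φ, namely the set { g*φ : g ∈ GL(7,ℝ) }, is an open subset of the (35-dimensional) vector space of alternating 3-forms on ℝ⁷. (Its elements are the definite 3-forms on ℝ⁷.) -/
open scoped BigOperators Matrix

noncomputable section

namespace G2

/-- The standard basis vector `e i` of `ℝ⁷`. -/
def e (i : Fin 7) : Fin 7 → ℝ := fun j => if j = i then 1 else 0

/-- The 3-form `e^a ∧ e^b ∧ e^c` (determinant convention), evaluated on `(x, y, z)`. -/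
def w3 (a b c : Fin 7) (x y z : Fin 7 → ℝ) : ℝ :=
  x a * (y b * z c - y c * z b) - x b * (y a * z c - y c * z a)
    + x c * (y a * z b - y b * z a)

/-- The 4-form `e^a ∧ e^b ∧ e^c ∧ e^d`, evaluated on `(x, y, z, w)`. -/
def w4 (a b c d : Fin 7) (x y z w : Fin 7 → ℝ) : ℝ :=
  Matrix.det !![x a, x b, x c, x d; y a, y b, y c, y d;
                z a, z b, z c, z d; w a, w b, w c, w d]

/-- The fundamental `G₂` 3-form
`φ = e^{123}+e^{145}+e^{167}+e^{246}-e^{257}-e^{347}-e^{356}` (indices shifted to start at 0),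
as a trilinear alternating function of three vectors. -/
def phi (x y z : Fin 7 → ℝ) : ℝ :=
  w3 0 1 2 x y z + w3 0 3 4 x y z + w3 0 5 6 x y z + w3 1 3 5 x y z
    - w3 1 4 6 x y z - w3 2 3 6 x y z - w3 2 4 5 x y z

/-- The 4-form `ψ = *φ = e^{4567}+e^{2367}+e^{2345}+e^{1357}-e^{1346}-e^{1256}-e^{1247}`
(indices shifted to start at 0), as a function of four vectors. -/
def psi (x y z w : Fin 7 → ℝ) : ℝ :=
  w4 3 4 5 6 x y z w + w4 1 2 5 6 x y z w + w4 1 2 3 4 x y z w + w4 0 2 4 6 x y z w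
    - w4 0 2 3 5 x y z w - w4 0 1 4 5 x y z w - w4 0 1 3 6 x y z w

/-- `ε_{ijk} = φ(e_i, e_j, e_k)`. -/
def eps (i j k : Fin 7) : ℝ := phi (e i) (e j) (e k)

/-- `ε_{ijkl} = ψ(e_i, e_j, e_k, e_l)`. -/
def eps4 (i j k l : Fin 7) : ℝ := psi (e i) (e j) (e k) (e l)

/-- The volume form `e^1 ∧ ⋯ ∧ e^7`, evaluated on a 7-tuple of vectors. -/
def vol (v : Fin 7 → (Fin 7 → ℝ)) : ℝ := Matrix.det (Matrix.of fun i j => v i j)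

/-- The matrix `[v]` with `[v]_{ij} = Σ_k ε_{ijk} v_k`. -/
def bracket (v : Fin 7 → ℝ) : Matrix (Fin 7) (Fin 7) ℝ :=
  Matrix.of fun i j => ∑ k : Fin 7, eps i j k * v k

/-- The vector `⟨A⟩` with `⟨A⟩_i = Σ_{j,k} ε_{ijk} A_{jk}`. -/
def angle (A : Matrix (Fin 7) (Fin 7) ℝ) : Fin 7 → ℝ :=
  fun i => ∑ j : Fin 7, ∑ k : Fin 7, eps i j k * A j k

/-- Wedge product of two 2-forms (determinant convention), evaluated on four vectors. -/
def wedge22 (A B : (Fin 7 → ℝ) → (Fin 7 → ℝ) → ℝ) (v : Fin 4 → (Fin 7 → ℝ)) : ℝ :=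
  (1 / 4 : ℝ) * ∑ σ : Equiv.Perm (Fin 4),
    ((Equiv.Perm.sign σ : ℤ) : ℝ) * (A (v (σ 0)) (v (σ 1)) * B (v (σ 2)) (v (σ 3)))

/-- Wedge product of three 2-forms (determinant convention), evaluated on six vectors. -/
def wedge222 (A B C : (Fin 7 → ℝ) → (Fin 7 → ℝ) → ℝ) (v : Fin 6 → (Fin 7 → ℝ)) : ℝ :=
  (1 / 8 : ℝ) * ∑ σ : Equiv.Perm (Fin 6),
    ((Equiv.Perm.sign σ : ℤ) : ℝ) *
      (A (v (σ 0)) (v (σ 1)) * B (v (σ 2)) (v (σ 3)) * C (v (σ 4)) (v (σ 5)))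

/-- Wedge product of two 2-forms and a 3-form (determinant convention),
evaluated on seven vectors. -/
def wedge223 (A B : (Fin 7 → ℝ) → (Fin 7 → ℝ) → ℝ)
    (C : (Fin 7 → ℝ) → (Fin 7 → ℝ) → (Fin 7 → ℝ) → ℝ)
    (v : Fin 7 → (Fin 7 → ℝ)) : ℝ :=
  (1 / 24 : ℝ) * ∑ σ : Equiv.Perm (Fin 7),
    ((Equiv.Perm.sign σ : ℤ) : ℝ) *
      (A (v (σ 0)) (v (σ 1)) * B (v (σ 2)) (v (σ 3)) * C (v (σ 4)) (v (σ 5)) (v (σ 6)))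

/-- The map `i_φ : S²(ℝ⁷)* → Λ³(ℝ⁷)*`,
`i_φ(h) = Σ_{i,j,k,l} ε_{ikl} h_{ij} e^j ∧ e^k ∧ e^l`, evaluated on `(x, y, z)`. -/
def iphi (h : Fin 7 → Fin 7 → ℝ) (x y z : Fin 7 → ℝ) : ℝ :=
  ∑ i : Fin 7, ∑ j : Fin 7, ∑ k : Fin 7, ∑ l : Fin 7, eps i k l * h i j * w3 j k l x y z

/-- The space of alternating 3-forms on `ℝ⁷`, described by their (totally antisymmetric)
coefficient tensors `T_{ijk} = γ(e_i,e_j,e_k)`; a 35-dimensional vector space, topologized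
as a subspace of all tensors. -/
def Alt3 : Type :=
  {T : Fin 7 → Fin 7 → Fin 7 → ℝ //
    ∀ i j k : Fin 7, T j i k = -(T i j k) ∧ T i k j = -(T i j k)}

instance : TopologicalSpace Alt3 :=
  inferInstanceAs (TopologicalSpace
    {T : Fin 7 → Fin 7 → Fin 7 → ℝ //
      ∀ i j k : Fin 7, T j i k = -(T i j k) ∧ T i k j = -(T i j k)})

/-!
The orbit is homogeneous, so by the inverse function theorem it is open as soon as the derivative
`D` of `g ↦ g*φ` at the identity is surjective. A functional on 3-forms vanishing on the range of
`D` is an antisymmetric tensor `T` with `⟨T i⟩ = 0` for every `i`, where `T i` is the skew matrix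
`(T i j k)_{jk}`. A skew matrix `A` with `⟨A⟩ = 0` is a derivation of `φ` (it lies in `𝔤₂`), and
this says that `R i a b c = [T i a]_{bc}` satisfies the first Bianchi identity in `a, b, c`.
Being also skew in `i, a` and in `b, c`, it has the pair symmetry `R i a b c = R b c i a` of a
curvature tensor. Contracting `b, c` with `ε`, the left side gives `6 T i a d` since
`⟨[v]⟩ = 6 v`, while the right side is a combination of the `⟨T p⟩ d` and vanishes. So `T = 0`.
-/

section OpenOrbit

variable {𝕜 V F ι : Type*} [NontriviallyNormedField 𝕜] [Fintype ι] [DecidableEq ι]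
  [NormedAddCommGroup V] [NormedSpace 𝕜 V] [CompleteSpace V]
  [NormedAddCommGroup F] [NormedSpace 𝕜 F] [CompleteSpace F]

open Topology ContinuousAlternatingMap

/-- The orbit of an alternating form `ω` under pullback by invertible continuous linear maps. -/
def pullbackOrbit (ω : V [⋀^ι]→L[𝕜] F) : Set (V [⋀^ι]→L[𝕜] F) :=
  {η | ∃ g : (V →L[𝕜] V)ˣ, η = ω.compContinuousLinearMap (g : V →L[𝕜] V)}

theorem pullbackOrbit_mem_nhds_self {ω : V [⋀^ι]→L[𝕜] F}
    (hω : Function.Surjective (ω.fderivCompContinuousLinearMap (.id 𝕜 V))) :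
    pullbackOrbit ω ∈ 𝓝 ω := by
  have hderiv : HasStrictFDerivAt (fun A : V →L[𝕜] V ↦ ω.compContinuousLinearMap A)
      (ω.fderivCompContinuousLinearMap (.id 𝕜 V)) (.id 𝕜 V) := by
    simpa using (hasStrictFDerivAt_const ω _).continuousAlternatingMapCompContinuousLinearMap
      (hasStrictFDerivAt_id (ContinuousLinearMap.id 𝕜 V))
  have hmap := hderiv.map_nhds_eq_of_surj (LinearMap.range_eq_top.2 hω)
  have hid : ω.compContinuousLinearMap (.id 𝕜 V) = ω := rfl
  rw [← hid, ← hmap, Filter.mem_map]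
  filter_upwards [Units.nhds (1 : (V →L[𝕜] V)ˣ)]
  rintro _ ⟨g, rfl⟩
  exact ⟨g, rfl⟩

theorem isOpen_pullbackOrbit {ω : V [⋀^ι]→L[𝕜] F}
    (hω : Function.Surjective (ω.fderivCompContinuousLinearMap (.id 𝕜 V))) :
    IsOpen (pullbackOrbit ω) := by
  rw [isOpen_iff_mem_nhds]
  rintro _ ⟨g, rfl⟩
  have hinv : compContinuousLinearMapCLM (↑g⁻¹ : V →L[𝕜] V)
      (ω.compContinuousLinearMap (g : V →L[𝕜] V)) = ω := by
    change ω.compContinuousLinearMap (g * ↑g⁻¹ : V →L[𝕜] V) = ω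
    rw [Units.mul_inv]
    rfl
  have hnhds := pullbackOrbit_mem_nhds_self hω
  rw [← hinv] at hnhds
  filter_upwards
    [(compContinuousLinearMapCLM (↑g⁻¹ : V →L[𝕜] V)).continuous.continuousAt hnhds]
  rintro η ⟨h, hη⟩
  rw [hinv] at hη
  refine ⟨h * g, ?_⟩
  calc η = η.compContinuousLinearMap (↑g⁻¹ * ↑g : V →L[𝕜] V) := by rw [Units.inv_mul]; rfl
    _ = (η.compContinuousLinearMap (↑g⁻¹ : V →L[𝕜] V)).compContinuousLinearMap
        (g : V →L[𝕜] V) := rfl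
    _ = ω.compContinuousLinearMap (↑(h * g) : V →L[𝕜] V) :=
      congrArg (fun ζ ↦ compContinuousLinearMap ζ (g : V →L[𝕜] V)) hη

end OpenOrbit

theorem mem_pullbackOrbit_iff_exists_GL {n ι 𝕜 F : Type*} [NontriviallyNormedField 𝕜]
    [CompleteSpace 𝕜] [Fintype n] [DecidableEq n] [NormedAddCommGroup F] [NormedSpace 𝕜 F]
    {ω η : (n → 𝕜) [⋀^ι]→L[𝕜] F} :
    η ∈ pullbackOrbit ω ↔ ∃ g : GL n 𝕜,
      η = ω.compContinuousLinearMap (g : Matrix n n 𝕜).mulVecLin.toContinuousLinearMap :=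
  let Φ : GL n 𝕜 ≃* ((n → 𝕜) →L[𝕜] (n → 𝕜))ˣ :=
    Units.mapEquiv ((Matrix.toLinAlgEquiv' (R := 𝕜) (n := n)).toMulEquiv.trans
      (Module.End.toContinuousLinearMap (𝕜 := 𝕜) (n → 𝕜)).toMulEquiv)
  Φ.surjective.exists

section Coordinates

variable {n 𝕜 : Type*} [NontriviallyNormedField 𝕜]

/-- The coordinate form `⋀ₐ dx^{s a}` on `n → 𝕜`, in the determinant convention. -/
def coordWedge {ι : Type*} [Fintype ι] [DecidableEq ι] (s : ι → n) : (n → 𝕜) [⋀^ι]→L[𝕜] 𝕜 where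
  toAlternatingMap := Matrix.detRowAlternating.compLinearMap (LinearMap.funLeft 𝕜 𝕜 s)
  cont := by
    change Continuous fun v : ι → n → 𝕜 ↦ (Matrix.of fun a b ↦ v a (s b)).det
    fun_prop

theorem coordWedge_apply {ι : Type*} [Fintype ι] [DecidableEq ι] (s : ι → n) (v : ι → n → 𝕜) :
    coordWedge s v = (Matrix.of fun a b ↦ v a (s b)).det := rfl

theorem coordWedge_three_apply (i j k : n) (v : Fin 3 → n → 𝕜) :
    coordWedge ![i, j, k] v =
      v 0 i * (v 1 j * v 2 k - v 1 k * v 2 j) - v 0 j * (v 1 i * v 2 k - v 1 k * v 2 i)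
        + v 0 k * (v 1 i * v 2 j - v 1 j * v 2 i) := by
  simp only [coordWedge_apply, Matrix.det_fin_three, Matrix.of_apply, Matrix.cons_val]
  ring

/-- Total antisymmetry of a three-index tensor, expressed through the two adjacent
transpositions; for `n = Fin 7` this is the condition defining `Alt3`. -/
def IsAlternating {R : Type*} [Neg R] (T : n → n → n → R) : Prop :=
  ∀ i j k, T j i k = -(T i j k) ∧ T i k j = -(T i j k)

theorem IsAlternating.rotate {R : Type*} [InvolutiveNeg R] {T : n → n → n → R}
    (hT : IsAlternating T) (i j k : n) : T j k i = T i j k := by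
  rw [(hT j i k).2, (hT i j k).1, neg_neg]

theorem isAlternating_coordWedge :
    IsAlternating fun i j k : n ↦ (coordWedge ![i, j, k] : (n → 𝕜) [⋀^Fin 3]→L[𝕜] 𝕜) := by
  intro i j k
  constructor <;> ext v <;>
    simp only [ContinuousAlternatingMap.neg_apply, coordWedge_three_apply] <;> ring

/-- The 3-form `∑_{i < j < k} T_{ijk} dx^i ∧ dx^j ∧ dx^k` with antisymmetric coefficient tensor `T`.
Summing over all triples counts each term six times. -/
def formOfCoeffs [Fintype n] (T : n → n → n → 𝕜) : (n → 𝕜) [⋀^Fin 3]→L[𝕜] 𝕜 :=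
  (1 / 6 : 𝕜) • ∑ i, ∑ j, ∑ k, T i j k • coordWedge ![i, j, k]

theorem continuous_formOfCoeffs [Fintype n] :
    Continuous (formOfCoeffs : (n → n → n → 𝕜) → (n → 𝕜) [⋀^Fin 3]→L[𝕜] 𝕜) := by
  unfold formOfCoeffs
  fun_prop

variable [DecidableEq n]

/-- The coefficients `ω(e_i, e_j, e_k)` of a 3-form in the standard basis. -/
def coeffs (ω : (n → 𝕜) [⋀^Fin 3]→L[𝕜] 𝕜) (i j k : n) : 𝕜 :=
  ω ![Pi.single i 1, Pi.single j 1, Pi.single k 1]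

theorem isAlternating_coeffs (ω : (n → 𝕜) [⋀^Fin 3]→L[𝕜] 𝕜) : IsAlternating (coeffs ω) := by
  intro i j k
  have swap01 := ω.map_swap ![Pi.single i 1, Pi.single j 1, Pi.single k 1]
    (show (0 : Fin 3) ≠ 1 by decide)
  have swap12 := ω.map_swap ![Pi.single i 1, Pi.single j 1, Pi.single k 1]
    (show (1 : Fin 3) ≠ 2 by decide)
  constructor
  · refine (congrArg ω ?_).trans swap01
    ext m : 1
    fin_cases m <;> rfl
  · refine (congrArg ω ?_).trans swap12
    ext m : 1
    fin_cases m <;> rfl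

theorem coeffs_injective [Finite n] :
    Function.Injective (coeffs : (n → 𝕜) [⋀^Fin 3]→L[𝕜] 𝕜 → n → n → n → 𝕜) := by
  intro ω η h
  refine ContinuousAlternatingMap.toAlternatingMap_injective
    ((Pi.basisFun 𝕜 n).ext_alternating fun s _ ↦ ?_)
  have hs : (fun m ↦ Pi.basisFun 𝕜 n (s m)) =
      ![Pi.single (s 0) 1, Pi.single (s 1) 1, Pi.single (s 2) 1] := by
    ext m : 1
    fin_cases m <;> simp
  rw [hs]
  exact congr_fun₃ h _ _ _

variable [Fintype n] [CharZero 𝕜]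

theorem coeffs_formOfCoeffs {T : n → n → n → 𝕜} (hT : IsAlternating T) :
    coeffs (formOfCoeffs T) = T := by
  ext i j k
  have expand : coeffs (formOfCoeffs T) i j k =
      (1 / 6) * (T i j k - T i k j - T j i k + T j k i + T k i j - T k j i) := by
    simp only [coeffs, formOfCoeffs, ContinuousAlternatingMap.smul_apply,
      ContinuousAlternatingMap.sum_apply, coordWedge_three_apply, Matrix.cons_val, Pi.single_apply,
      smul_eq_mul, mul_ite, mul_one, mul_zero, mul_sub, mul_add, Finset.sum_add_distrib,
      Finset.sum_sub_distrib, Finset.sum_ite_eq', Finset.mem_univ, ↓reduceIte,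
      Finset.sum_ite_irrel, Finset.sum_const_zero]
    ring
  rw [expand, (hT i j k).2, (hT i j k).1, (hT j k i).1, hT.rotate i j k, ← hT.rotate k i j]
  ring

theorem formOfCoeffs_coeffs (ω : (n → 𝕜) [⋀^Fin 3]→L[𝕜] 𝕜) : formOfCoeffs (coeffs ω) = ω :=
  coeffs_injective (coeffs_formOfCoeffs (isAlternating_coeffs ω))

theorem formOfCoeffs_eq_iff {T : n → n → n → 𝕜} (hT : IsAlternating T)
    (ω : (n → 𝕜) [⋀^Fin 3]→L[𝕜] 𝕜) : formOfCoeffs T = ω ↔ ∀ i j k, T i j k = coeffs ω i j k := by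
  rw [← coeffs_injective.eq_iff, coeffs_formOfCoeffs hT]
  simp only [funext_iff]

end Coordinates

theorem linearMap_ext_coordWedge {n 𝕜 M : Type*} [NontriviallyNormedField 𝕜] [CharZero 𝕜]
    [Finite n] [AddCommGroup M] [Module 𝕜 M] {f g : ((n → 𝕜) [⋀^Fin 3]→L[𝕜] 𝕜) →ₗ[𝕜] M}
    (h : ∀ i j k, f (coordWedge ![i, j, k]) = g (coordWedge ![i, j, k])) : f = g := by
  classical
  have := Fintype.ofFinite n
  ext ω
  rw [← formOfCoeffs_coeffs ω]
  simp only [formOfCoeffs, map_smul, map_sum, h]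

theorem pair_symm_of_bianchi {ι 𝕜 : Type*} [Field 𝕜] [CharZero 𝕜] {R : ι → ι → ι → ι → 𝕜}
    (skew_left : ∀ a b c d, R b a c d = -R a b c d)
    (skew_right : ∀ a b c d, R a b d c = -R a b c d)
    (bianchi : ∀ a b c d, R a b c d + R a c d b + R a d b c = 0) (a b c d : ι) :
    R a b c d = R c d a b := by
  linear_combination
    (1 / 2) * (bianchi a b c d - bianchi b c d a - bianchi c d a b + bianchi d a b c
      + skew_left a b c d + skew_left b c d a - skew_left a d b c - skew_left c d a b
      + skew_left b d a c - skew_right d b a c + skew_left a c b d - skew_right a c b d)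

theorem e_eq_single (i : Fin 7) : e i = Pi.single i 1 := by
  ext j
  simp [e, Pi.single_apply]

theorem angle_eq (A : Matrix (Fin 7) (Fin 7) ℝ) :
    angle A = ![A 1 2 - A 2 1 + A 3 4 - A 4 3 + A 5 6 - A 6 5,
      A 2 0 - A 0 2 + A 3 5 - A 5 3 + A 6 4 - A 4 6,
      A 0 1 - A 1 0 + A 5 4 - A 4 5 + A 6 3 - A 3 6,
      A 4 0 - A 0 4 + A 5 1 - A 1 5 + A 2 6 - A 6 2,
      A 0 3 - A 3 0 + A 1 6 - A 6 1 + A 2 5 - A 5 2,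
      A 6 0 - A 0 6 + A 1 3 - A 3 1 + A 4 2 - A 2 4,
      A 0 5 - A 5 0 + A 4 1 - A 1 4 + A 3 2 - A 2 3] := by
  ext i
  fin_cases i <;>
    simp only [angle, eps, phi, w3, e, Fin.sum_univ_seven, Fin.reduceFinMk, Fin.zero_eta,
      Fin.mk_one, Fin.reduceEq, ↓reduceIte, Matrix.cons_val] <;>
    ring

theorem phi_eq_sum_mul (x y z : Fin 7 → ℝ) : phi x y z = ∑ k, phi x y (e k) * z k := by
  simp only [phi, w3, e, Fin.sum_univ_seven, Fin.reduceEq, ↓reduceIte]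
  ring

theorem bracket_apply (v : Fin 7 → ℝ) (i j : Fin 7) : bracket v i j = phi (e i) (e j) v :=
  (phi_eq_sum_mul (e i) (e j) v).symm

theorem angle_bracket (v : Fin 7 → ℝ) : angle (bracket v) = (6 : ℝ) • v := by
  ext i
  simp only [angle_eq, bracket_apply, phi, w3, e, Fin.reduceEq, ↓reduceIte,
    Pi.smul_apply, smul_eq_mul]
  fin_cases i <;>
    simp only [Fin.reduceFinMk, Fin.zero_eta, Fin.mk_one, Matrix.cons_val] <;>
    ring

theorem w4_eq_sum_w3 (a b c d : Fin 7) (x y z w : Fin 7 → ℝ) :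
    w4 a b c d x y z w =
      w3 a b c x y z * w d - w3 a b d x y z * w c + w3 a c d x y z * w b
        - w3 b c d x y z * w a := by
  rw [w4, Matrix.det_succ_row _ (3 : Fin 4)]
  simp only [w3, Fin.sum_univ_four, Matrix.det_fin_three, Matrix.submatrix_apply, Matrix.of_apply,
    Fin.succAbove, Fin.isValue, Fin.reduceCastSucc, Fin.reduceSucc, Fin.reduceLT,
    Fin.castSucc_zero, Fin.coe_ofNat_eq_mod, Matrix.cons_val, ↓reduceIte]
  ring

theorem phi_mulVec_sub_transpose (A : Matrix (Fin 7) (Fin 7) ℝ) (x y z : Fin 7 → ℝ) :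
    phi ((A - Aᵀ) *ᵥ x) y z + phi x ((A - Aᵀ) *ᵥ y) z + phi x y ((A - Aᵀ) *ᵥ z) =
      psi x y z (angle A) := by
  rw [angle_eq]
  simp only [phi, psi, w4_eq_sum_w3, w3, Matrix.mulVec, dotProduct, Fin.sum_univ_seven,
    Matrix.sub_apply, Matrix.transpose_apply, Matrix.cons_val]
  ring

theorem psi_zero_right (x y z : Fin 7 → ℝ) : psi x y z 0 = 0 := by
  simp [psi, w4_eq_sum_w3]

theorem phi_mulVec_add_eq_zero {A : Matrix (Fin 7) (Fin 7) ℝ} (hA : Aᵀ = -A)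
    (hangle : angle A = 0) (x y z : Fin 7 → ℝ) :
    phi (A *ᵥ x) y z + phi x (A *ᵥ y) z + phi x y (A *ᵥ z) = 0 := by
  have h := phi_mulVec_sub_transpose A x y z
  rw [hA, sub_neg_eq_add, hangle, psi_zero_right] at h
  simp only [Matrix.add_mulVec, phi, w3, Pi.add_apply] at h ⊢
  linear_combination (1 / 2) * h

theorem bracket_apply_swap (v : Fin 7 → ℝ) (i j : Fin 7) : bracket v j i = -bracket v i j := by
  simp only [bracket_apply, phi, w3]
  ring

theorem bracket_neg (v : Fin 7 → ℝ) : bracket (-v) = -bracket v := by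
  ext i j
  simp [bracket]

theorem bracket_bianchi {A : Matrix (Fin 7) (Fin 7) ℝ} (hA : Aᵀ = -A) (hangle : angle A = 0)
    (a b c : Fin 7) : bracket (A a) b c + bracket (A b) c a + bracket (A c) a b = 0 := by
  have hcol (i : Fin 7) : A *ᵥ e i = -A i := by
    ext j
    simpa [e_eq_single] using congr_fun₂ hA i j
  have h := phi_mulVec_add_eq_zero hA hangle (e a) (e b) (e c)
  simp only [hcol, bracket_apply, phi, w3, Pi.neg_apply] at h ⊢
  linear_combination -h

theorem bracket_pair_symm {T : Fin 7 → Fin 7 → Fin 7 → ℝ} (hT : IsAlternating T)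
    (hangle : ∀ i, angle (.of (T i)) = 0) (i a b c : Fin 7) :
    bracket (T i a) b c = bracket (T b c) i a := by
  refine pair_symm_of_bianchi (R := fun i a b c ↦ bracket (T i a) b c) (fun i a b c ↦ ?_)
    (fun i a b c ↦ bracket_apply_swap (T i a) b c)
    (fun i ↦ bracket_bianchi (by ext a b; exact (hT i a b).2) (hangle i)) i a b c
  rw [show T a i = -T i a from funext fun d ↦ (hT i a d).1, bracket_neg, Matrix.neg_apply]

theorem eq_zero_of_angle_eq_zero {T : Fin 7 → Fin 7 → Fin 7 → ℝ} (hT : IsAlternating T)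
    (hangle : ∀ i, angle (.of (T i)) = 0) : T = 0 := by
  ext i a d
  have h6 : 6 * T i a d = 0 :=
    calc 6 * T i a d = angle (bracket (T i a)) d := by rw [angle_bracket]; rfl
      _ = ∑ b, ∑ c, eps d b c * ∑ p, eps i a p * T b c p := by
        simp only [angle, bracket_pair_symm hT hangle i a]
        rfl
      _ = ∑ p, eps i a p * ∑ b, ∑ c, eps d b c * T p b c := by
        simp only [Finset.mul_sum, mul_left_comm (eps d _ _)]
        rw [Finset.sum_comm_cycle]
        exact Fintype.sum_congr _ _ fun p ↦ Fintype.sum_congr _ _ fun b ↦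
          Fintype.sum_congr _ _ fun c ↦ by rw [hT.rotate p b c]
      _ = 0 := Finset.sum_eq_zero fun p _ ↦ by
        rw [show ∑ b, ∑ c, eps d b c * T p b c = angle (.of (T p)) d from rfl, hangle p,
          Pi.zero_apply, mul_zero]
  simpa using h6

theorem coordWedge_eq_w3 (i j k : Fin 7) (v : Fin 3 → Fin 7 → ℝ) :
    coordWedge ![i, j, k] v = w3 i j k (v 0) (v 1) (v 2) :=
  coordWedge_three_apply i j k v

/-- The trilinear function `phi`, bundled as an alternating form. -/
def phiForm : (Fin 7 → ℝ) [⋀^Fin 3]→L[ℝ] ℝ :=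
  coordWedge ![0, 1, 2] + coordWedge ![0, 3, 4] + coordWedge ![0, 5, 6] + coordWedge ![1, 3, 5]
    - coordWedge ![1, 4, 6] - coordWedge ![2, 3, 6] - coordWedge ![2, 4, 5]

theorem phiForm_apply (v : Fin 3 → Fin 7 → ℝ) : phiForm v = phi (v 0) (v 1) (v 2) := by
  simp [phiForm, phi, coordWedge_eq_w3]

theorem fderiv_phiForm_apply (A : (Fin 7 → ℝ) →L[ℝ] (Fin 7 → ℝ)) (v : Fin 3 → Fin 7 → ℝ) :
    phiForm.fderivCompContinuousLinearMap (.id ℝ _) A v =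
      phi (A (v 0)) (v 1) (v 2) + phi (v 0) (A (v 1)) (v 2) + phi (v 0) (v 1) (A (v 2)) := by
  simp [ContinuousAlternatingMap.fderivCompContinuousLinearMap_apply, phiForm_apply,
    Fin.sum_univ_three]

theorem fderiv_phiForm_smulRight (i a : Fin 7) :
    phiForm.fderivCompContinuousLinearMap (.id ℝ _)
        ((ContinuousLinearMap.proj (R := ℝ) i).smulRight (e a)) =
      (1 / 2 : ℝ) • ∑ j, ∑ k, eps a j k • coordWedge ![i, j, k] := by
  ext v
  have hangle : (∑ j, ∑ k, eps a j k • coordWedge ![i, j, k]) v =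
      angle (.of fun j k ↦ w3 i j k (v 0) (v 1) (v 2)) a := by
    simp [angle, ContinuousAlternatingMap.sum_apply, coordWedge_eq_w3]
  rw [ContinuousAlternatingMap.smul_apply, hangle, angle_eq, fderiv_phiForm_apply]
  fin_cases a <;>
    simp only [ContinuousLinearMap.smulRight_apply, ContinuousLinearMap.proj_apply, phi, w3, e,
      Matrix.of_apply, Pi.smul_apply, smul_eq_mul, Fin.reduceFinMk, Fin.zero_eta, Fin.mk_one,
      Fin.reduceEq, ↓reduceIte, Matrix.cons_val] <;>
    ring

theorem fderiv_phiForm_surjective :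
    Function.Surjective (phiForm.fderivCompContinuousLinearMap (.id ℝ (Fin 7 → ℝ))) := by
  rw [← ContinuousLinearMap.coe_coe, ← LinearMap.dualMap_injective_iff, injective_iff_map_eq_zero]
  intro ℓ hℓ
  let T : Fin 7 → Fin 7 → Fin 7 → ℝ := fun i j k ↦ ℓ (coordWedge ![i, j, k])
  have halt : IsAlternating T := fun i j k ↦
    ⟨(congrArg ℓ (isAlternating_coordWedge i j k).1).trans (map_neg ℓ _),
      (congrArg ℓ (isAlternating_coordWedge i j k).2).trans (map_neg ℓ _)⟩
  have hangle (i : Fin 7) : angle (.of (T i)) = 0 := by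
    ext a
    have hkill := LinearMap.congr_fun hℓ ((ContinuousLinearMap.proj (R := ℝ) i).smulRight (e a))
    simpa [fderiv_phiForm_smulRight, angle, T] using hkill
  have hzero : T = 0 := eq_zero_of_angle_eq_zero halt hangle
  exact linearMap_ext_coordWedge (congr_fun₃ hzero)

/-- the `GL(7,ℝ)`-orbit of `φ`, i.e. the set of pullbacks `g*φ` for
`g ∈ GL(7,ℝ)` (here described by coefficient tensors `(g*φ)_{ijk} = φ(g e_i, g e_j, g e_k)`),
is an open subset of the space of alternating 3-forms on `ℝ⁷`. -/
theorem orbit_of_phi_isOpen :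
    IsOpen {T : Alt3 | ∃ g : GL (Fin 7) ℝ, ∀ i j k : Fin 7,
      T.1 i j k = phi ((g : Matrix (Fin 7) (Fin 7) ℝ).mulVec (e i))
        ((g : Matrix (Fin 7) (Fin 7) ℝ).mulVec (e j))
        ((g : Matrix (Fin 7) (Fin 7) ℝ).mulVec (e k))} := by
  have hopen : IsOpen ((fun T : Alt3 ↦ formOfCoeffs T.1) ⁻¹' pullbackOrbit phiForm) :=
    (isOpen_pullbackOrbit fderiv_phiForm_surjective).preimage
      (continuous_formOfCoeffs.comp continuous_subtype_val)
  convert hopen using 1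
  ext T
  rw [Set.mem_preimage, mem_pullbackOrbit_iff_exists_GL]
  refine exists_congr fun g ↦ ?_
  simp only [formOfCoeffs_eq_iff T.2, coeffs, e_eq_single, phiForm_apply,
    ContinuousAlternatingMap.compContinuousLinearMap_apply]
  rfl

end G2

end
end

section
/- The stabilizer of φ acts transitively on orthonormal pairs: if u₁, u₂ ∈ ℝ⁷ and v₁, v₂ ∈ ℝ⁷ each satisfy |u₁| = |u₂| = |v₁| = |v₂| = 1, ⟨u₁,u₂⟩ = 0, and ⟨v₁,v₂⟩ = 0, then there exists g ∈ GL(7,ℝ) with g*φ = φ, g u₁ = v₁, and g u₂ = v₂. -/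
open scoped BigOperators Matrix

noncomputable section

namespace G2

/-!
An orthonormal pair `a`, `b` spans, together with `a × b`, a copy of the imaginary quaternions
inside the imaginary octonions `ℝ⁷`. Adjoining a unit vector `d` orthogonal to this copy is a
Cayley–Dickson doubling: every vector is uniquely `u + t d + w × d` with `u`, `w` quaternionic and
`t` real, and both the cross product and the scalar product of two such vectors are given by
formulas in the coordinates `(u, t, w)` which do not depend on the choice of `a`, `b`, `d`. So the
linear map carrying the standard such triple to `(a, b, d)` preserves both products, hence also
`φ(x, y, z) = ⟨x × y, z⟩`; a pair is then moved to another one through the standard pair.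
-/

section Orthogonal

lemma mem_orthogonalGroup_of_mulVec_dotProduct {n R : Type*} [Fintype n] [DecidableEq n]
    [CommRing R] {A : Matrix n n R} (h : ∀ x y, A *ᵥ x ⬝ᵥ A *ᵥ y = x ⬝ᵥ y) :
    A ∈ Matrix.orthogonalGroup n R := by
  rw [Matrix.mem_orthogonalGroup_iff']
  ext i j
  calc (Aᵀ * A) i j = A *ᵥ Pi.single i 1 ⬝ᵥ A *ᵥ Pi.single j 1 := by
        simp only [Matrix.mulVec_single_one]; rfl
    _ = (1 : Matrix n n R) i j := by
        rw [h, single_one_dotProduct, Matrix.one_eq_pi_single, Pi.single_comm]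

lemma exists_unit_orthogonal {m n : Type*} [Fintype m] [Fintype n]
    (hmn : Fintype.card m < Fintype.card n) (v : m → n → ℝ) :
    ∃ d : n → ℝ, d ⬝ᵥ d = 1 ∧ ∀ i, v i ⬝ᵥ d = 0 := by
  obtain ⟨x, hx, hx_ne⟩ := (Submodule.ne_bot_iff _).1 <|
    LinearMap.ker_ne_bot_of_finrank_lt (f := (Matrix.of v).mulVecLin) (by simpa using hmn)
  have hpos : 0 < x ⬝ᵥ x := Matrix.dotProduct_self_star_pos_iff.2 hx_ne
  refine ⟨(√(x ⬝ᵥ x))⁻¹ • x, ?_, fun i ↦ ?_⟩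
  · rw [smul_dotProduct, dotProduct_smul, smul_eq_mul, smul_eq_mul, ← mul_assoc, ← mul_inv,
      Real.mul_self_sqrt hpos.le, inv_mul_cancel₀ hpos.ne']
  · rw [dotProduct_smul, show v i ⬝ᵥ x = 0 from congrFun hx i, smul_zero]

end Orthogonal

section CrossProduct

variable {R : Type*} [CommRing R]

/-- The seven-dimensional (octonionic) cross product, with signs chosen such that
`⟨x × y, z⟩ = φ(x, y, z)`. -/
def cross : (Fin 7 → R) →ₗ[R] (Fin 7 → R) →ₗ[R] (Fin 7 → R) :=
  LinearMap.mk₂ R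
    (fun x y ↦
      ![x 1 * y 2 - x 2 * y 1 + (x 3 * y 4 - x 4 * y 3) + (x 5 * y 6 - x 6 * y 5),
        x 2 * y 0 - x 0 * y 2 + (x 3 * y 5 - x 5 * y 3) - (x 4 * y 6 - x 6 * y 4),
        x 0 * y 1 - x 1 * y 0 - (x 3 * y 6 - x 6 * y 3) - (x 4 * y 5 - x 5 * y 4),
        x 4 * y 0 - x 0 * y 4 + (x 5 * y 1 - x 1 * y 5) - (x 6 * y 2 - x 2 * y 6),
        x 0 * y 3 - x 3 * y 0 - (x 6 * y 1 - x 1 * y 6) - (x 5 * y 2 - x 2 * y 5),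
        x 6 * y 0 - x 0 * y 6 + (x 1 * y 3 - x 3 * y 1) - (x 2 * y 4 - x 4 * y 2),
        x 0 * y 5 - x 5 * y 0 - (x 1 * y 4 - x 4 * y 1) - (x 2 * y 3 - x 3 * y 2)])
    (fun _ _ _ ↦ by ext i; fin_cases i <;> simp <;> ring)
    (fun _ _ _ ↦ by ext i; fin_cases i <;> simp <;> ring)
    (fun _ _ _ ↦ by ext i; fin_cases i <;> simp <;> ring)
    (fun _ _ _ ↦ by ext i; fin_cases i <;> simp <;> ring)

local infixl:74 " ⨯₇ " => cross

lemma cross_apply (x y : Fin 7 → R) :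
    x ⨯₇ y =
      ![x 1 * y 2 - x 2 * y 1 + (x 3 * y 4 - x 4 * y 3) + (x 5 * y 6 - x 6 * y 5),
        x 2 * y 0 - x 0 * y 2 + (x 3 * y 5 - x 5 * y 3) - (x 4 * y 6 - x 6 * y 4),
        x 0 * y 1 - x 1 * y 0 - (x 3 * y 6 - x 6 * y 3) - (x 4 * y 5 - x 5 * y 4),
        x 4 * y 0 - x 0 * y 4 + (x 5 * y 1 - x 1 * y 5) - (x 6 * y 2 - x 2 * y 6),
        x 0 * y 3 - x 3 * y 0 - (x 6 * y 1 - x 1 * y 6) - (x 5 * y 2 - x 2 * y 5),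
        x 6 * y 0 - x 0 * y 6 + (x 1 * y 3 - x 3 * y 1) - (x 2 * y 4 - x 4 * y 2),
        x 0 * y 5 - x 5 * y 0 - (x 1 * y 4 - x 4 * y 1) - (x 2 * y 3 - x 3 * y 2)] :=
  rfl

lemma phi_eq_cross_dotProduct (x y z : Fin 7 → ℝ) : phi x y z = x ⨯₇ y ⬝ᵥ z := by
  simp only [phi, w3, cross_apply, dotProduct, Fin.sum_univ_seven, Matrix.cons_val]
  ring

lemma cross_self (x : Fin 7 → R) : x ⨯₇ x = 0 := by
  ext i; fin_cases i <;> simp [cross_apply] <;> ring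

lemma neg_cross (x y : Fin 7 → R) : -(x ⨯₇ y) = y ⨯₇ x := by
  ext i; fin_cases i <;> simp [cross_apply] <;> ring

lemma cross_dotProduct (x y z : Fin 7 → R) : x ⨯₇ y ⬝ᵥ z = x ⬝ᵥ y ⨯₇ z := by
  simp only [cross_apply, dotProduct, Fin.sum_univ_seven, Matrix.cons_val]
  ring

lemma cross_dotProduct_self_right (x y : Fin 7 → R) : x ⨯₇ y ⬝ᵥ y = 0 := by
  rw [cross_dotProduct, cross_self, dotProduct_zero]

lemma cross_cross_add_cross_cross (x y z : Fin 7 → R) :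
    x ⨯₇ (y ⨯₇ z) + x ⨯₇ y ⨯₇ z =
      (2 * (x ⬝ᵥ z)) • y - (x ⬝ᵥ y) • z - (y ⬝ᵥ z) • x := by
  ext i
  fin_cases i <;> simp [cross_apply, dotProduct, Fin.sum_univ_seven] <;> ring

lemma cross_cross_self (x y : Fin 7 → R) :
    x ⨯₇ (y ⨯₇ x) = (x ⬝ᵥ x) • y - (x ⬝ᵥ y) • x := by
  have h := cross_cross_add_cross_cross x x y
  rw [cross_self, map_zero, LinearMap.zero_apply, add_zero, ← neg_cross y x, map_neg] at h
  rw [← neg_inj, h]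
  module

section Doubling

variable {d u u' w w' : Fin 7 → R}

lemma cross_cross_self_of_unit (hd : d ⬝ᵥ d = 1) (hw : w ⬝ᵥ d = 0) : d ⨯₇ (w ⨯₇ d) = w := by
  rw [cross_cross_self, hd, dotProduct_comm, hw, one_smul, zero_smul, sub_zero]

lemma cross_cross_of_orthogonal (hu : u ⬝ᵥ d = 0) (hw : w ⬝ᵥ d = 0) :
    u ⨯₇ (w ⨯₇ d) = -(u ⬝ᵥ w) • d - u ⨯₇ w ⨯₇ d := by
  rw [eq_sub_iff_add_eq, cross_cross_add_cross_cross, hu, hw]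
  module

lemma cross_cross_cross_of_unit (hd : d ⬝ᵥ d = 1) (hu : u ⬝ᵥ d = 0) (hw : w ⬝ᵥ d = 0)
    (huw : u ⨯₇ w ⬝ᵥ d = 0) : u ⨯₇ d ⨯₇ (w ⨯₇ d) = -(u ⨯₇ w) := by
  have hdwd : d ⬝ᵥ w ⨯₇ d = 0 := by rw [dotProduct_comm, cross_dotProduct_self_right]
  have h := cross_cross_add_cross_cross u d (w ⨯₇ d)
  rw [cross_cross_self_of_unit hd hw, ← cross_dotProduct, huw, hu, hdwd] at h
  rw [eq_neg_iff_add_eq_zero, add_comm, h]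
  module

lemma cross_dotProduct_cross_of_unit (hd : d ⬝ᵥ d = 1) (hw : w ⬝ᵥ d = 0) :
    u ⨯₇ d ⬝ᵥ w ⨯₇ d = u ⬝ᵥ w := by
  rw [cross_dotProduct, cross_cross_self_of_unit hd hw]

lemma cross_doubling (hd : d ⬝ᵥ d = 1) (hu : u ⬝ᵥ d = 0) (hw : w ⬝ᵥ d = 0) (hu' : u' ⬝ᵥ d = 0)
    (hw' : w' ⬝ᵥ d = 0) (hww' : w ⨯₇ w' ⬝ᵥ d = 0) (t t' : R) :
    (u + t • d + w ⨯₇ d) ⨯₇ (u' + t' • d + w' ⨯₇ d) =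
      (u ⨯₇ u' - w ⨯₇ w' + t • w' - t' • w) + (w ⬝ᵥ u' - u ⬝ᵥ w') • d +
        (t' • u - t • u' - u ⨯₇ w' - w ⨯₇ u') ⨯₇ d := by
  have hdu' : d ⨯₇ u' = -(u' ⨯₇ d) := (neg_cross u' d).symm
  have hwdd : w ⨯₇ d ⨯₇ d = -w := by rw [← neg_cross, cross_cross_self_of_unit hd hw]
  have hwdu' : w ⨯₇ d ⨯₇ u' = (w ⬝ᵥ u') • d - w ⨯₇ u' ⨯₇ d := by
    rw [← neg_cross, cross_cross_of_orthogonal hu' hw, ← neg_cross w u', dotProduct_comm u',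
      map_neg, LinearMap.neg_apply]
    module
  simp only [map_add, map_sub, map_smul, LinearMap.add_apply, LinearMap.sub_apply,
    LinearMap.smul_apply, cross_self, hdu', hwdd, hwdu', cross_cross_self_of_unit hd hw',
    cross_cross_of_orthogonal hu hw', cross_cross_cross_of_unit hd hw hw' hww']
  module

lemma dotProduct_doubling (hd : d ⬝ᵥ d = 1) (hu : u ⬝ᵥ d = 0) (hu' : u' ⬝ᵥ d = 0)
    (hw' : w' ⬝ᵥ d = 0) (huw' : u ⨯₇ w' ⬝ᵥ d = 0) (hwu' : w ⨯₇ u' ⬝ᵥ d = 0) (t t' : R) :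
    (u + t • d + w ⨯₇ d) ⬝ᵥ (u' + t' • d + w' ⨯₇ d) = u ⬝ᵥ u' + t * t' + w ⬝ᵥ w' := by
  have hdu' : d ⬝ᵥ u' = 0 := by rw [dotProduct_comm, hu']
  have hdwd' : d ⬝ᵥ w' ⨯₇ d = 0 := by rw [dotProduct_comm, cross_dotProduct_self_right]
  have huwd' : u ⬝ᵥ w' ⨯₇ d = 0 := by rw [← cross_dotProduct, huw']
  have hwdu' : w ⨯₇ d ⬝ᵥ u' = 0 := by
    rw [cross_dotProduct, ← neg_cross, dotProduct_neg, ← cross_dotProduct, hwu', neg_zero]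
  simp only [add_dotProduct, dotProduct_add, smul_dotProduct, dotProduct_smul, smul_eq_mul,
    hu, hd, hdu', hdwd', huwd', hwdu', cross_dotProduct_self_right,
    cross_dotProduct_cross_of_unit hd hw']
  ring

end Doubling

section Quaternionic

variable {a b d : Fin 7 → R}

/-- The linear map `ℝ³ → ℝ⁷` onto the span of `a`, `b`, `a × b`. For orthonormal `a`, `b` it is the
inclusion of the imaginary quaternions with `i ↦ a`, `j ↦ b`, `k ↦ a × b`. -/
def quatMap (a b : Fin 7 → R) : (Fin 3 → R) →ₗ[R] (Fin 7 → R) :=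
  Fintype.linearCombination R ![a, b, a ⨯₇ b]

lemma quatMap_apply (a b : Fin 7 → R) (u : Fin 3 → R) :
    quatMap a b u = u 0 • a + u 1 • b + u 2 • (a ⨯₇ b) := by
  simp [quatMap, Fintype.linearCombination_apply, Fin.sum_univ_three]

lemma quatMap_dotProduct_quatMap (ha : a ⬝ᵥ a = 1) (hb : b ⬝ᵥ b = 1) (hab : a ⬝ᵥ b = 0)
    (u w : Fin 3 → R) : quatMap a b u ⬝ᵥ quatMap a b w = u ⬝ᵥ w := by
  have hba : b ⬝ᵥ a = 0 := by rw [dotProduct_comm, hab]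
  have hac : a ⬝ᵥ a ⨯₇ b = 0 := by rw [← cross_dotProduct, cross_self, zero_dotProduct]
  have hca : a ⨯₇ b ⬝ᵥ a = 0 := by rw [dotProduct_comm, hac]
  have hbc : b ⬝ᵥ a ⨯₇ b = 0 := by rw [dotProduct_comm, cross_dotProduct_self_right]
  have hcc : a ⨯₇ b ⬝ᵥ a ⨯₇ b = 1 := by rw [cross_dotProduct_cross_of_unit hb hab, ha]
  simp only [quatMap_apply, add_dotProduct, dotProduct_add, smul_dotProduct, dotProduct_smul,
    smul_eq_mul, ha, hb, hab, hba, hac, hca, hbc, hcc, cross_dotProduct_self_right,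
    Matrix.vec3_dotProduct]
  ring

lemma quatMap_cross_quatMap (ha : a ⬝ᵥ a = 1) (hb : b ⬝ᵥ b = 1) (hab : a ⬝ᵥ b = 0)
    (u w : Fin 3 → R) : quatMap a b u ⨯₇ quatMap a b w = quatMap a b (u ⨯₃ w) := by
  have hba : b ⨯₇ a = -(a ⨯₇ b) := (neg_cross a b).symm
  have hbc : b ⨯₇ (a ⨯₇ b) = a := cross_cross_self_of_unit hb hab
  have hcb : a ⨯₇ b ⨯₇ b = -a := by rw [← neg_cross, hbc]
  have hac : a ⨯₇ (a ⨯₇ b) = -b := by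
    rw [← neg_cross b a, map_neg, cross_cross_self_of_unit ha (by rw [dotProduct_comm, hab])]
  have hca : a ⨯₇ b ⨯₇ a = b := by rw [← neg_cross, hac, neg_neg]
  simp only [quatMap_apply, map_add, map_smul, LinearMap.add_apply, LinearMap.smul_apply,
    cross_self, hba, hbc, hcb, hac, hca, _root_.cross_apply, Matrix.cons_val]
  module

end Quaternionic

section BasicTriple

/-- The basic triples `(a, b, d)` of octonion algebra: three orthonormal vectors, the third being
orthogonal to `a × b` as well. -/
structure BasicTriple (a b d : Fin 7 → R) : Prop where
  fst_unit : a ⬝ᵥ a = 1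
  snd_unit : b ⬝ᵥ b = 1
  thd_unit : d ⬝ᵥ d = 1
  fst_snd : a ⬝ᵥ b = 0
  fst_thd : a ⬝ᵥ d = 0
  snd_thd : b ⬝ᵥ d = 0
  cross_thd : a ⨯₇ b ⬝ᵥ d = 0

/-- The quaternionic coordinate `u` of `x = u + t d + w × d`, for the standard basic triple. -/
def quatPart (x : Fin 7 → R) : Fin 3 → R := ![x 0, x 1, x 2]

/-- The quaternionic coordinate `w` of `x = u + t d + w × d`, for the standard basic triple. The
sign is due to `(e₁ × e₂) × e₄ = -e₇`. -/
def doublePart (x : Fin 7 → R) : Fin 3 → R := ![x 4, x 5, -x 6]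

lemma dotProduct_eq_parts (x y : Fin 7 → R) :
    x ⬝ᵥ y = quatPart x ⬝ᵥ quatPart y + x 3 * y 3 + doublePart x ⬝ᵥ doublePart y := by
  simp only [quatPart, doublePart, dotProduct, Fin.sum_univ_seven, Fin.sum_univ_three,
    Matrix.cons_val]
  ring

lemma quatPart_cross (x y : Fin 7 → R) :
    quatPart (x ⨯₇ y) =
      quatPart x ⨯₃ quatPart y - doublePart x ⨯₃ doublePart y +
        x 3 • doublePart y - y 3 • doublePart x := by
  ext i
  fin_cases i <;> simp [quatPart, doublePart, cross_apply, _root_.cross_apply] <;> ring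

lemma cross_apply_three (x y : Fin 7 → R) :
    (x ⨯₇ y) 3 = doublePart x ⬝ᵥ quatPart y - quatPart x ⬝ᵥ doublePart y := by
  simp only [quatPart, doublePart, Matrix.vec3_dotProduct, cross_apply, Matrix.cons_val]
  ring

lemma doublePart_cross (x y : Fin 7 → R) :
    doublePart (x ⨯₇ y) =
      y 3 • quatPart x - x 3 • quatPart y -
        quatPart x ⨯₃ doublePart y - doublePart x ⨯₃ quatPart y := by
  ext i
  fin_cases i <;> simp [quatPart, doublePart, cross_apply, _root_.cross_apply] <;> ring

/-- The matrix of the linear map which carries the standard basic triple `(e₁, e₂, e₄)` to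
`(a, b, d)` and respects cross products of these vectors. -/
def frameMatrix (a b d : Fin 7 → R) : Matrix (Fin 7) (Fin 7) R :=
  (Matrix.of ![a, b, a ⨯₇ b, d, a ⨯₇ d, b ⨯₇ d, -(a ⨯₇ b ⨯₇ d)])ᵀ

lemma frameMatrix_mulVec (a b d x : Fin 7 → R) :
    frameMatrix a b d *ᵥ x =
      quatMap a b (quatPart x) + x 3 • d + quatMap a b (doublePart x) ⨯₇ d := by
  ext i
  simp only [frameMatrix, Matrix.mulVec, dotProduct, Matrix.transpose_apply, Matrix.of_apply,
    Fin.sum_univ_seven, quatMap_apply, quatPart, doublePart, map_add, map_smul,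
    LinearMap.add_apply, LinearMap.smul_apply, Pi.add_apply, Pi.smul_apply, Pi.neg_apply,
    smul_eq_mul, Matrix.cons_val]
  ring

namespace BasicTriple

variable {a b d : Fin 7 → R}

lemma quatMap_dotProduct (h : BasicTriple a b d) (u : Fin 3 → R) : quatMap a b u ⬝ᵥ d = 0 := by
  simp [quatMap_apply, h.fst_thd, h.snd_thd, h.cross_thd]

lemma quatMap_cross_dotProduct (h : BasicTriple a b d) (u w : Fin 3 → R) :
    quatMap a b u ⨯₇ quatMap a b w ⬝ᵥ d = 0 := by
  rw [quatMap_cross_quatMap h.fst_unit h.snd_unit h.fst_snd, h.quatMap_dotProduct]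

lemma frameMatrix_mulVec_dotProduct (h : BasicTriple a b d) (x y : Fin 7 → R) :
    frameMatrix a b d *ᵥ x ⬝ᵥ frameMatrix a b d *ᵥ y = x ⬝ᵥ y := by
  rw [frameMatrix_mulVec, frameMatrix_mulVec,
    dotProduct_doubling h.thd_unit (h.quatMap_dotProduct _) (h.quatMap_dotProduct _)
      (h.quatMap_dotProduct _) (h.quatMap_cross_dotProduct _ _) (h.quatMap_cross_dotProduct _ _)]
  simp only [quatMap_dotProduct_quatMap h.fst_unit h.snd_unit h.fst_snd, ← dotProduct_eq_parts]

lemma frameMatrix_mulVec_cross (h : BasicTriple a b d) (x y : Fin 7 → R) :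
    (frameMatrix a b d *ᵥ x) ⨯₇ (frameMatrix a b d *ᵥ y) = frameMatrix a b d *ᵥ (x ⨯₇ y) := by
  simp only [frameMatrix_mulVec]
  rw [cross_doubling h.thd_unit (h.quatMap_dotProduct _) (h.quatMap_dotProduct _)
    (h.quatMap_dotProduct _) (h.quatMap_dotProduct _) (h.quatMap_cross_dotProduct _ _)]
  simp only [quatMap_dotProduct_quatMap h.fst_unit h.snd_unit h.fst_snd,
    quatMap_cross_quatMap h.fst_unit h.snd_unit h.fst_snd, quatPart_cross, cross_apply_three,
    doublePart_cross, map_add, map_sub, map_smul]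

lemma frameMatrix_mem_orthogonalGroup (h : BasicTriple a b d) :
    frameMatrix a b d ∈ Matrix.orthogonalGroup (Fin 7) R :=
  mem_orthogonalGroup_of_mulVec_dotProduct h.frameMatrix_mulVec_dotProduct

end BasicTriple

end BasicTriple

end CrossProduct

section Stabilizer

/-- The stabilizer of `φ` in `GL(7, ℝ)`, i.e. the Lie group `G₂`. -/
def phiStabilizer : Subgroup (GL (Fin 7) ℝ) where
  carrier := {g | ∀ x y z, phi (g.1 *ᵥ x) (g.1 *ᵥ y) (g.1 *ᵥ z) = phi x y z}
  one_mem' := by simp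
  mul_mem' {g k} hg hk x y z := by simp only [Units.val_mul, ← Matrix.mulVec_mulVec, hg _, hk _]
  inv_mem' {g} hg x y z := by
    rw [← hg]
    simp only [Matrix.mulVec_mulVec, Units.mul_inv, Matrix.one_mulVec]

lemma exists_mem_phiStabilizer_of_basicTriple {a b d : Fin 7 → ℝ} (h : BasicTriple a b d) :
    ∃ g ∈ phiStabilizer, g.1 *ᵥ e 0 = a ∧ g.1 *ᵥ e 1 = b ∧ g.1 *ᵥ e 3 = d := by
  have hunit : IsUnit (frameMatrix a b d) :=
    IsUnit.of_mul_eq_one_right _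
      ((Matrix.mem_orthogonalGroup_iff' _ _).1 h.frameMatrix_mem_orthogonalGroup)
  refine ⟨hunit.unit, fun x y z ↦ ?_, ?_, ?_, ?_⟩
  · simp only [IsUnit.unit_spec, phi_eq_cross_dotProduct, h.frameMatrix_mulVec_cross,
      h.frameMatrix_mulVec_dotProduct]
  all_goals simp [frameMatrix_mulVec, quatMap_apply, quatPart, doublePart, e]

lemma exists_mem_phiStabilizer_of_orthonormal {a b : Fin 7 → ℝ} (ha : a ⬝ᵥ a = 1)
    (hb : b ⬝ᵥ b = 1) (hab : a ⬝ᵥ b = 0) :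
    ∃ g ∈ phiStabilizer, g.1 *ᵥ e 0 = a ∧ g.1 *ᵥ e 1 = b := by
  obtain ⟨d, hd, hd_orth⟩ := exists_unit_orthogonal (by simp) ![a, b, cross a b]
  obtain ⟨g, hg, hga, hgb, -⟩ := exists_mem_phiStabilizer_of_basicTriple
    ⟨ha, hb, hd, hab, hd_orth 0, hd_orth 1, hd_orth 2⟩
  exact ⟨g, hg, hga, hgb⟩

end Stabilizer

/-- the stabilizer of `φ` acts transitively on orthonormal pairs of vectors
in `ℝ⁷`. -/
theorem stabilizer_transitive_on_orthonormal_pairs (u₁ u₂ v₁ v₂ : Fin 7 → ℝ)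
    (hu₁ : ∑ i : Fin 7, u₁ i * u₁ i = 1) (hu₂ : ∑ i : Fin 7, u₂ i * u₂ i = 1)
    (hv₁ : ∑ i : Fin 7, v₁ i * v₁ i = 1) (hv₂ : ∑ i : Fin 7, v₂ i * v₂ i = 1)
    (hu : ∑ i : Fin 7, u₁ i * u₂ i = 0) (hv : ∑ i : Fin 7, v₁ i * v₂ i = 0) :
    ∃ g : GL (Fin 7) ℝ,
      (∀ x y z : Fin 7 → ℝ,
        phi ((g : Matrix (Fin 7) (Fin 7) ℝ).mulVec x)
            ((g : Matrix (Fin 7) (Fin 7) ℝ).mulVec y)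
            ((g : Matrix (Fin 7) (Fin 7) ℝ).mulVec z) = phi x y z) ∧
      (g : Matrix (Fin 7) (Fin 7) ℝ).mulVec u₁ = v₁ ∧
      (g : Matrix (Fin 7) (Fin 7) ℝ).mulVec u₂ = v₂ := by
  obtain ⟨g, hg, rfl, rfl⟩ := exists_mem_phiStabilizer_of_orthonormal hu₁ hu₂ hu
  obtain ⟨k, hk, rfl, rfl⟩ := exists_mem_phiStabilizer_of_orthonormal hv₁ hv₂ hv
  refine ⟨k * g⁻¹, mul_mem hk (inv_mem hg), ?_, ?_⟩ <;>
    rw [Matrix.mulVec_mulVec, ← Units.val_mul, inv_mul_cancel_right]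

end G2

end
end
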